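/- Asymptotics of the Weyl solution in a sector (Lemma 2, equation (17)): Fix δ ∈ (0, π/2) and x ∈ [0,T). Then, as |λ| → ∞ with arg λ ∈ [δ, π−δ] (for such λ of large modulus Δ₁(λ) ≠ 0, so Φ(x,λ) is defined), one has (h_{1,1} − i h_{1,2}) e^{−iλx} Φ(x,λ) → (1, −i)ᵀ. -/

import Mathlib

open MeasureTheory Set Filter

noncomputable section

/-- A function `f : ℝ → ℂ` is absolutely continuous on `[0, T]`:
it is the indefinite integral of an integrable function. -/
def AbsContOn (f : ℝ → ℂ) (T : ℝ) : Prop :=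
  ∃ g : ℝ → ℂ, IntervalIntegrable g volume 0 T ∧
    ∀ x ∈ Icc (0 : ℝ) T, f x = f 0 + ∫ t in (0 : ℝ)..x, g t

/-- `y : ℝ → ℂ × ℂ` is a solution of the Dirac system `B y' + Ω y = λ y` on `[0, T]`,
where `B = ![![0,1],![-1,0]]` and `Ω = ![![p,q],![q,-p]]`:  `y` is continuous on `[0,T]`
and satisfies the equivalent system of integral equations coming from
`y₁' = q y₁ - (p + λ) y₂`, `y₂' = (λ - p) y₁ - q y₂`
(this encodes: `y` is absolutely continuous and the ODE holds a.e.). -/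
def IsDiracSol (p q : ℝ → ℂ) (T : ℝ) (lam : ℂ) (y : ℝ → ℂ × ℂ) : Prop :=
  ContinuousOn y (Icc (0 : ℝ) T) ∧
    ∀ x ∈ Icc (0 : ℝ) T,
      ((y x).1 = (y 0).1 + ∫ t in (0 : ℝ)..x, (q t * (y t).1 - (p t + lam) * (y t).2)) ∧
      ((y x).2 = (y 0).2 + ∫ t in (0 : ℝ)..x, ((lam - p t) * (y t).1 - q t * (y t).2))

/-- A nonlocal linear form `U(y) = ∫_{[0,T]} y₁ dμ₁ + ∫_{[0,T]} y₂ dμ₂`, where the complex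
Borel measures `μᵢ` are encoded (via Radon–Nikodym) as integrable complex densities `wᵢ`
with respect to finite positive measures. -/
structure NonlocalForm (T : ℝ) where
  μ₁ : Measure ℝ
  μ₂ : Measure ℝ
  finite₁ : IsFiniteMeasure μ₁
  finite₂ : IsFiniteMeasure μ₂
  w₁ : ℝ → ℂ
  w₂ : ℝ → ℂ
  int₁ : Integrable w₁ μ₁
  int₂ : Integrable w₂ μ₂

namespace NonlocalForm

variable {T : ℝ}

/-- The value `U(y)` of the nonlocal form on a function `y`. -/
def app (U : NonlocalForm T) (y : ℝ → ℂ × ℂ) : ℂ :=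
  (∫ t in Icc (0 : ℝ) T, U.w₁ t * (y t).1 ∂U.μ₁) +
    ∫ t in Icc (0 : ℝ) T, U.w₂ t * (y t).2 ∂U.μ₂

/-- `h₁ = μ₁({0})`, the mass of the first complex measure at `0`. -/
def h₁ (U : NonlocalForm T) : ℂ := U.w₁ 0 * ((U.μ₁ {0}).toReal : ℂ)

/-- `h₂ = μ₂({0})`, the mass of the second complex measure at `0`. -/
def h₂ (U : NonlocalForm T) : ℂ := U.w₂ 0 * ((U.μ₂ {0}).toReal : ℂ)

end NonlocalForm

/-- A two-point (local) linear form `y ↦ c₁ y₁(t) + c₂ y₂(t)`. -/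
def locForm (c₁ c₂ : ℂ) (t : ℝ) (y : ℝ → ℂ × ℂ) : ℂ := c₁ * (y t).1 + c₂ * (y t).2

/-- `f` and `g` have the same order of zero at `z` (order possibly `0` or `∞`):
for every `n`, the first `n` derivatives of `f` vanish at `z` iff
the first `n` derivatives of `g` do. -/
def ZeroOrderEq (f g : ℂ → ℂ) (z : ℂ) : Prop :=
  ∀ n : ℕ, (∀ k < n, iteratedDeriv k f z = 0) ↔ (∀ k < n, iteratedDeriv k g z = 0)

/-- The filter of `λ → ∞` within the sector `arg λ ∈ [δ, π - δ]`. -/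
def sectorFilter (δ : ℝ) : Filter ℂ :=
  Filter.comap (fun lam : ℂ => ‖lam‖) Filter.atTop ⊓
    Filter.principal {lam : ℂ | Complex.arg lam ∈ Icc δ (Real.pi - δ)}

/-!
Let `ψ = X₂₁(T) X₁ - X₁₁(T) X₂`, the solution with `ψ₁(T) = 0` and `U₁(ψ) = Δ₁`. The coefficient
matrix has trace zero, so Wronskians are constant; hence `ψ(T) = (0, -1)`, and every solution whose
first component vanishes at `T` is a multiple of `ψ`. In particular `Φ = η / U₁(η)` for
`η = 2i e^{iλT} ψ`.

The amplitudes `u = e^{-iλt} (η₁ + i η₂)` and `v = e^{-iλt} (η₁ - i η₂)` solve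
`u' = (q - ip) v`, `v' = -2iλ v + (q + ip) u` with `u(T) = 2`, `v(T) = -2`. Going backwards from
`T`, `v` decays like `e^{-2 (Im λ) (T - t)}` up to `O(1 / Im λ)`, so `u` varies only by
`O(1 / Im λ)`. As `Im λ → ∞` this gives `e^{-iλt} η(t) → (1, -i)` for `t < T`, with a uniform bound
on `[0, T]`. Thus `η` is bounded and tends to zero off `t = 0`, and dominated convergence yields
`U₁(η) → h₁ - i h₂`: only the atoms at `0` survive.
-/

theorem AbsContOn.continuousOn {f : ℝ → ℂ} {T : ℝ} (hf : AbsContOn f T) :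
    ContinuousOn f (Icc 0 T) := by
  obtain ⟨g, hg, hfg⟩ := hf
  have hprim := intervalIntegral.continuousOn_primitive_interval' hg left_mem_uIcc
  exact (continuousOn_const.add (hprim.mono Icc_subset_uIcc)).congr hfg

theorem sectorFilter_le_comap_im_atTop {δ : ℝ} (hδ : δ ∈ Ioo 0 (Real.pi / 2)) :
    sectorFilter δ ≤ comap Complex.im atTop := by
  rw [← tendsto_iff_comap]
  have hsin : 0 < Real.sin δ := Real.sin_pos_of_pos_of_lt_pi hδ.1 (by linarith [hδ.2, Real.pi_pos])
  have hnorm : Tendsto (fun lam : ℂ => ‖lam‖ * Real.sin δ) (sectorFilter δ) atTop :=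
    (tendsto_comap.mono_left inf_le_left).atTop_mul_const hsin
  refine tendsto_atTop_mono' _ ?_ hnorm
  filter_upwards [mem_inf_of_right (mem_principal_self _)] with lam ⟨harg₁, harg₂⟩
  rw [← Complex.norm_mul_sin_arg lam]
  gcongr
  rcases le_total lam.arg (Real.pi / 2) with h | h
  · exact Real.sin_le_sin_of_le_of_le_pi_div_two (by linarith [hδ.1]) h harg₁
  · rw [← Real.sin_pi_sub lam.arg]
    exact Real.sin_le_sin_of_le_of_le_pi_div_two (by linarith [hδ.1]) (by linarith) (by linarith)

/-! ### Derivatives and growth on an interval -/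

theorem hasDerivWithinAt_Icc_of_eq_add_integral {E : Type*} [NormedAddCommGroup E]
    [NormedSpace ℝ E] [CompleteSpace E] {f g : ℝ → E} {c : E} {a b : ℝ}
    (hg : ContinuousOn g (Icc a b)) (hf : ∀ x ∈ Icc a b, f x = c + ∫ t in a..x, g t)
    {x : ℝ} (hx : x ∈ Icc a b) : HasDerivWithinAt f (g x) (Icc a b) x := by
  have : Fact (x ∈ Icc a b) := ⟨hx⟩
  have hint : IntervalIntegrable g volume a x :=
    (hg.mono (Icc_subset_Icc_right hx.2)).intervalIntegrable_of_Icc hx.1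
  exact ((intervalIntegral.integral_hasDerivWithinAt_right hint
    (hg.stronglyMeasurableAtFilter_nhdsWithin measurableSet_Icc x) (hg x hx)).const_add c).congr
    hf (hf x hx)

theorem norm_sub_le_sub_of_norm_hasDerivWithinAt_le {E : Type*} [NormedAddCommGroup E]
    [NormedSpace ℝ E] {f f' : ℝ → E} {B B' : ℝ → ℝ} {a b : ℝ} (hab : a ≤ b)
    (hf : ∀ t ∈ Icc a b, HasDerivWithinAt f (f' t) (Icc a b) t)
    (hB : ∀ t, HasDerivAt B (B' t) t) (hbound : ∀ t ∈ Ico a b, ‖f' t‖ ≤ B' t) :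
    ‖f b - f a‖ ≤ B b - B a :=
  image_norm_le_of_norm_deriv_right_le_deriv_boundary
    (f := fun t => f t - f a) (B := fun t => B t - B a)
    (fun t ht => ((hf t ht).sub_const _).continuousWithinAt)
    (fun t ht => ((hf t (Ico_subset_Icc_self ht)).sub_const _).mono_of_mem_nhdsWithin
      (Icc_mem_nhdsGE_of_mem ht))
    (by simp) (fun t => (hB t).sub_const _) hbound (right_mem_Icc.2 hab)

theorem hasDerivAt_cexp_mul_ofReal (k : ℂ) (t : ℝ) :
    HasDerivAt (fun s : ℝ => Complex.exp (k * s)) (Complex.exp (k * t) * k) t := by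
  simpa using ((Complex.ofRealCLM.hasDerivAt (x := t)).const_mul k).cexp

theorem hasDerivAt_exp_mul_sub (r c t : ℝ) :
    HasDerivAt (fun s => Real.exp (r * (s - c))) (Real.exp (r * (t - c)) * r) t := by
  simpa using (((hasDerivAt_id t).sub_const c).const_mul r).exp

theorem norm_le_of_hasDerivWithinAt_mul_add {μ : ℂ} (hμ : 0 < μ.re) {v g : ℝ → ℂ} {x T G : ℝ}
    (hxT : x ≤ T) (hv : ∀ t ∈ Icc x T, HasDerivWithinAt v (μ * v t + g t) (Icc x T) t)
    (hg : ∀ t ∈ Icc x T, ‖g t‖ ≤ G) :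
    ‖v x‖ ≤ ‖v T‖ * Real.exp (μ.re * (x - T)) + G / μ.re := by
  have hG : 0 ≤ G := (norm_nonneg _).trans (hg x (left_mem_Icc.2 hxT))
  have hexp (t : ℝ) : ‖Complex.exp (-μ * t)‖ = Real.exp (-μ.re * t) := by
    simp [Complex.norm_exp]
  have hderiv (t : ℝ) (ht : t ∈ Icc x T) :
      HasDerivWithinAt (fun s : ℝ => Complex.exp (-μ * s) * v s) (Complex.exp (-μ * t) * g t)
        (Icc x T) t :=
    ((hasDerivAt_cexp_mul_ofReal (-μ) t).hasDerivWithinAt.mul (hv t ht)).congr_deriv (by ring)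
  have hB (t : ℝ) : HasDerivAt (fun s => -(G / μ.re) * Real.exp (-μ.re * (s - 0)))
      (Real.exp (-μ.re * t) * G) t :=
    ((hasDerivAt_exp_mul_sub (-μ.re) 0 t).const_mul _).congr_deriv (by
      rw [sub_zero]; field_simp)
  have hmain := norm_sub_le_sub_of_norm_hasDerivWithinAt_le hxT hderiv hB fun t ht => by
    rw [norm_mul, hexp]
    gcongr
    exact hg t (Ico_subset_Icc_self ht)
  have hx : Real.exp (-μ.re * x) * ‖v x‖ ≤
      Real.exp (-μ.re * T) * ‖v T‖ + Real.exp (-μ.re * x) * (G / μ.re) := by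
    have htri := norm_sub_norm_le (Complex.exp (-μ * x) * v x) (Complex.exp (-μ * T) * v T)
    rw [norm_sub_rev, norm_mul, norm_mul, hexp, hexp] at htri
    have : 0 ≤ G / μ.re * Real.exp (-μ.re * T) := by positivity
    simp only [sub_zero] at hmain
    linarith
  refine le_of_mul_le_mul_left (hx.trans_eq ?_) (Real.exp_pos (-μ.re * x))
  rw [mul_add, mul_left_comm, ← Real.exp_add]
  ring_nf

/-! ### Coupled amplitudes -/

/-- The system `u' = α v`, `v' = μ v + β u` on `[0, T]`. A first-order system with two exponential
modes takes this form once the factor of one mode is divided out: `u` is the amplitude of that mode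
and `v`, growing like `exp (μ t)`, that of the other. -/
structure IsAmplitudePair (α β : ℝ → ℂ) (μ : ℂ) (T : ℝ) (u v : ℝ → ℂ) : Prop where
  hasDerivWithinAt_fst : ∀ t ∈ Icc 0 T, HasDerivWithinAt u (α t * v t) (Icc 0 T) t
  hasDerivWithinAt_snd : ∀ t ∈ Icc 0 T, HasDerivWithinAt v (μ * v t + β t * u t) (Icc 0 T) t

namespace IsAmplitudePair

section Bounds

variable {α β u v : ℝ → ℂ} {μ : ℂ} {T M A x : ℝ}

theorem norm_snd_le (h : IsAmplitudePair α β μ T u v) (hμ : 0 < μ.re)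
    (hβ : ∀ t ∈ Icc 0 T, ‖β t‖ ≤ M) (hu : ∀ t ∈ Icc 0 T, ‖u t‖ ≤ A) (hx : x ∈ Icc 0 T) :
    ‖v x‖ ≤ ‖v T‖ * Real.exp (μ.re * (x - T)) + M * A / μ.re := by
  have hM : 0 ≤ M := (norm_nonneg _).trans (hβ x hx)
  have hsub : Icc x T ⊆ Icc 0 T := Icc_subset_Icc_left hx.1
  refine norm_le_of_hasDerivWithinAt_mul_add hμ hx.2
    (fun t ht => (h.hasDerivWithinAt_snd t (hsub ht)).mono hsub) fun t ht => ?_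
  rw [norm_mul]
  exact mul_le_mul (hβ t (hsub ht)) (hu t (hsub ht)) (norm_nonneg _) hM

theorem norm_fst_sub_le (h : IsAmplitudePair α β μ T u v) (hμ : 0 < μ.re)
    (hα : ∀ t ∈ Icc 0 T, ‖α t‖ ≤ M) (hβ : ∀ t ∈ Icc 0 T, ‖β t‖ ≤ M)
    (hu : ∀ t ∈ Icc 0 T, ‖u t‖ ≤ A) (hx : x ∈ Icc 0 T) :
    ‖u T - u x‖ ≤ (M * ‖v T‖ + M ^ 2 * T * A) / μ.re := by
  have hM : 0 ≤ M := (norm_nonneg _).trans (hα x hx)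
  have hA : 0 ≤ A := (norm_nonneg _).trans (hu x hx)
  have hsub : Icc x T ⊆ Icc 0 T := Icc_subset_Icc_left hx.1
  have hB (t : ℝ) : HasDerivAt
      (fun s => M * ‖v T‖ / μ.re * Real.exp (μ.re * (s - T)) + M * (M * A / μ.re) * s)
      (M * (‖v T‖ * Real.exp (μ.re * (t - T)) + M * A / μ.re)) t :=
    (((hasDerivAt_exp_mul_sub μ.re T t).const_mul _).add
      ((hasDerivAt_id t).const_mul _)).congr_deriv (by field_simp)
  have hmain := norm_sub_le_sub_of_norm_hasDerivWithinAt_le hx.2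
    (fun t ht => (h.hasDerivWithinAt_fst t (hsub ht)).mono hsub) hB fun t ht => by
      have ht' := hsub (Ico_subset_Icc_self ht)
      rw [norm_mul]
      exact mul_le_mul (hα t ht') (h.norm_snd_le hμ hβ hu ht') (norm_nonneg _) hM
  rw [sub_self, mul_zero, Real.exp_zero] at hmain
  have hexp : 0 ≤ M * ‖v T‖ / μ.re * Real.exp (μ.re * (x - T)) := by positivity
  have hlin : 0 ≤ M * (M * A / μ.re) * x := mul_nonneg (by positivity) hx.1
  calc ‖u T - u x‖ ≤ M * ‖v T‖ / μ.re + M * (M * A / μ.re) * T := by linarith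
    _ = (M * ‖v T‖ + M ^ 2 * T * A) / μ.re := by ring

theorem norm_fst_le (h : IsAmplitudePair α β μ T u v) (hμ : 0 < μ.re)
    (hα : ∀ t ∈ Icc 0 T, ‖α t‖ ≤ M) (hβ : ∀ t ∈ Icc 0 T, ‖β t‖ ≤ M)
    (hM : M ≤ μ.re) (hMT : 2 * (M ^ 2 * T) ≤ μ.re) (hx : x ∈ Icc 0 T) :
    ‖u x‖ ≤ 2 * (‖u T‖ + ‖v T‖) := by
  have hcont : ContinuousOn u (Icc 0 T) := fun t ht =>
    (h.hasDerivWithinAt_fst t ht).continuousWithinAt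
  obtain ⟨x₀, hx₀, hmax⟩ := isCompact_Icc.exists_isMaxOn ⟨x, hx⟩ hcont.norm
  have hsub := h.norm_fst_sub_le hμ hα hβ (fun t ht => hmax ht) hx₀
  have hself : (M * ‖v T‖ + M ^ 2 * T * ‖u x₀‖) / μ.re ≤ ‖v T‖ + ‖u x₀‖ / 2 := by
    rw [div_le_iff₀ hμ]
    linarith [mul_le_mul_of_nonneg_right hM (norm_nonneg (v T)),
      mul_le_mul_of_nonneg_right hMT (norm_nonneg (u x₀))]
  have hle : ‖u x‖ ≤ ‖u x₀‖ := hmax hx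
  have htri : ‖u x₀‖ - ‖u T‖ ≤ ‖u T - u x₀‖ := norm_sub_rev (u T) _ ▸ norm_sub_norm_le _ _
  linarith

end Bounds

section Limits

variable {ι : Type*} {l : Filter ι} {α β : ℝ → ℂ} {μ : ι → ℂ} {u v : ι → ℝ → ℂ} {a b : ℂ} {T : ℝ}

theorem exists_eventually_bounds (h : ∀ i, IsAmplitudePair α β (μ i) T (u i) (v i))
    (hμ : Tendsto (fun i => (μ i).re) l atTop) (hα : ContinuousOn α (Icc 0 T))
    (hβ : ContinuousOn β (Icc 0 T)) (hu : ∀ i, u i T = a) (hv : ∀ i, v i T = b) :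
    ∃ A C : ℝ, ∀ᶠ i in l, 0 < (μ i).re ∧ ∀ x ∈ Icc 0 T, ‖u i x‖ ≤ A ∧
      ‖u i x - a‖ ≤ C / (μ i).re ∧
      ‖v i x‖ ≤ ‖b‖ * Real.exp ((μ i).re * (x - T)) + C / (μ i).re := by
  obtain ⟨Mα, hMα⟩ := isCompact_Icc.exists_bound_of_continuousOn hα
  obtain ⟨Mβ, hMβ⟩ := isCompact_Icc.exists_bound_of_continuousOn hβ
  set M := max Mα Mβ
  have hα' : ∀ t ∈ Icc 0 T, ‖α t‖ ≤ M := fun t ht => (hMα t ht).trans (le_max_left _ _)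
  have hβ' : ∀ t ∈ Icc 0 T, ‖β t‖ ≤ M := fun t ht => (hMβ t ht).trans (le_max_right _ _)
  set A := 2 * (‖a‖ + ‖b‖)
  refine ⟨A, max (M * ‖b‖ + M ^ 2 * T * A) (M * A), ?_⟩
  filter_upwards [hμ.eventually_gt_atTop 0, hμ.eventually_ge_atTop M,
    hμ.eventually_ge_atTop (2 * (M ^ 2 * T))] with i hpos hM hMT
  have hbound : ∀ t ∈ Icc 0 T, ‖u i t‖ ≤ A := fun t ht =>
    ((h i).norm_fst_le hpos hα' hβ' hM hMT ht).trans_eq (by rw [hu, hv])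
  refine ⟨hpos, fun x hx => ⟨hbound x hx, ?_, ?_⟩⟩
  · rw [norm_sub_rev, ← hu i, ← hv i]
    refine ((h i).norm_fst_sub_le hpos hα' hβ' hbound hx).trans ?_
    gcongr
    exact le_max_left _ _
  · rw [← hv i]
    refine ((h i).norm_snd_le hpos hβ' hbound hx).trans ?_
    gcongr
    exact le_max_right _ _

theorem tendsto_fst (h : ∀ i, IsAmplitudePair α β (μ i) T (u i) (v i))
    (hμ : Tendsto (fun i => (μ i).re) l atTop) (hα : ContinuousOn α (Icc 0 T))
    (hβ : ContinuousOn β (Icc 0 T)) (hu : ∀ i, u i T = a) (hv : ∀ i, v i T = b)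
    {x : ℝ} (hx : x ∈ Icc 0 T) : Tendsto (fun i => u i x) l (nhds a) := by
  obtain ⟨A, C, hbound⟩ := exists_eventually_bounds h hμ hα hβ hu hv
  rw [tendsto_iff_norm_sub_tendsto_zero]
  exact squeeze_zero' (Eventually.of_forall fun _ => norm_nonneg _)
    (hbound.mono fun i hi => (hi.2 x hx).2.1) (hμ.const_div_atTop C)

theorem tendsto_snd (h : ∀ i, IsAmplitudePair α β (μ i) T (u i) (v i))
    (hμ : Tendsto (fun i => (μ i).re) l atTop) (hα : ContinuousOn α (Icc 0 T))
    (hβ : ContinuousOn β (Icc 0 T)) (hu : ∀ i, u i T = a) (hv : ∀ i, v i T = b)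
    {x : ℝ} (hx : x ∈ Ico 0 T) : Tendsto (fun i => v i x) l (nhds 0) := by
  obtain ⟨A, C, hbound⟩ := exists_eventually_bounds h hμ hα hβ hu hv
  refine squeeze_zero_norm'
    (hbound.mono fun i hi => (hi.2 x (Ico_subset_Icc_self hx)).2.2) ?_
  have hexp : Tendsto (fun i => Real.exp ((μ i).re * (x - T))) l (nhds 0) :=
    Real.tendsto_exp_atBot.comp (hμ.atTop_mul_const_of_neg (sub_neg.2 hx.2))
  simpa using (hexp.const_mul ‖b‖).add (hμ.const_div_atTop C)

theorem exists_eventually_norm_le (h : ∀ i, IsAmplitudePair α β (μ i) T (u i) (v i))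
    (hμ : Tendsto (fun i => (μ i).re) l atTop) (hα : ContinuousOn α (Icc 0 T))
    (hβ : ContinuousOn β (Icc 0 T)) (hu : ∀ i, u i T = a) (hv : ∀ i, v i T = b) :
    ∃ K, ∀ᶠ i in l, ∀ x ∈ Icc 0 T, ‖u i x‖ ≤ K ∧ ‖v i x‖ ≤ K := by
  obtain ⟨A, C, hbound⟩ := exists_eventually_bounds h hμ hα hβ hu hv
  refine ⟨max A (‖b‖ + 1), ?_⟩
  filter_upwards [hbound, (hμ.const_div_atTop C).eventually_le_const one_pos] with i hi hC x hx
  obtain ⟨hux, -, hvx⟩ := hi.2 x hx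
  have hexp : Real.exp ((μ i).re * (x - T)) ≤ 1 :=
    Real.exp_le_one_iff.2 (mul_nonpos_of_nonneg_of_nonpos hi.1.le (sub_nonpos.2 hx.2))
  refine ⟨hux.trans (le_max_left _ _), hvx.trans (le_trans ?_ (le_max_right _ _))⟩
  exact add_le_add (mul_le_of_le_one_right (norm_nonneg b) hexp) hC

end Limits

end IsAmplitudePair

/-! ### The Dirac system -/

/-- The right-hand side of the Dirac system solved for the derivative:
`y' = B⁻¹ (λ - Ω(t)) y`. -/
def diracField (p q : ℝ → ℂ) (lam : ℂ) (t : ℝ) (v : ℂ × ℂ) : ℂ × ℂ :=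
  (q t * v.1 - (p t + lam) * v.2, (lam - p t) * v.1 - q t * v.2)

theorem diracField_smul (p q : ℝ → ℂ) (lam : ℂ) (t : ℝ) (c : ℂ) (v : ℂ × ℂ) :
    diracField p q lam t (c • v) = c • diracField p q lam t v := by
  ext <;> simp only [diracField, Prod.smul_fst, Prod.smul_snd, smul_eq_mul] <;> ring

theorem diracField_sub (p q : ℝ → ℂ) (lam : ℂ) (t : ℝ) (v w : ℂ × ℂ) :
    diracField p q lam t (v - w) = diracField p q lam t v - diracField p q lam t w := by
  ext <;> simp only [diracField, Prod.fst_sub, Prod.snd_sub] <;> ring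

/-- A classical solution of the Dirac system on `[0, T]`, with one-sided derivatives at the
endpoints; for continuous `p` and `q` every solution in the sense of `IsDiracSol` is one. -/
def IsDiracCurve (p q : ℝ → ℂ) (T : ℝ) (lam : ℂ) (y : ℝ → ℂ × ℂ) : Prop :=
  IsIntegralCurveOn y (diracField p q lam) (Icc 0 T)

theorem IsDiracSol.isDiracCurve {p q : ℝ → ℂ} {T : ℝ} {lam : ℂ} {y : ℝ → ℂ × ℂ}
    (hy : IsDiracSol p q T lam y) (hp : ContinuousOn p (Icc 0 T)) (hq : ContinuousOn q (Icc 0 T)) :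
    IsDiracCurve p q T lam y := by
  obtain ⟨hcont, hint⟩ := hy
  exact fun t ht => HasDerivWithinAt.prodMk
    (hasDerivWithinAt_Icc_of_eq_add_integral (by fun_prop) (fun x hx => (hint x hx).1) ht)
    (hasDerivWithinAt_Icc_of_eq_add_integral (by fun_prop) (fun x hx => (hint x hx).2) ht)

/-- The Wronskian `v₁ w₂ - v₂ w₁` of two vectors. -/
def wronskian (v w : ℂ × ℂ) : ℂ := v.1 * w.2 - v.2 * w.1

theorem eq_wronskian_smul_sub_of_wronskian_eq_one {v w : ℂ × ℂ} (h : wronskian v w = 1)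
    (z : ℂ × ℂ) : z = wronskian z w • v - wronskian z v • w := by
  unfold wronskian at *
  ext
  · simp only [Prod.fst_sub, Prod.smul_fst, smul_eq_mul]
    linear_combination -z.1 * h
  · simp only [Prod.snd_sub, Prod.smul_snd, smul_eq_mul]
    linear_combination -z.2 * h

/-- For two solutions `X₁`, `X₂` the combination `X₂₁(T) X₁ - X₁₁(T) X₂`, whose first component
vanishes at `T`; `Δ₁` is the value of `U₁` on it. -/
def endpointSol (X₁ X₂ : ℝ → ℂ × ℂ) (T t : ℝ) : ℂ × ℂ :=
  (X₂ T).1 • X₁ t - (X₁ T).1 • X₂ t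

theorem endpointSol_self (X₁ X₂ : ℝ → ℂ × ℂ) (T : ℝ) :
    endpointSol X₁ X₂ T T = (0, -wronskian (X₁ T) (X₂ T)) := by
  ext <;> simp only [endpointSol, wronskian, Prod.fst_sub, Prod.snd_sub, Prod.smul_fst,
    Prod.smul_snd, smul_eq_mul] <;> ring

/-- Twice the coefficient of `exp (i λ t) (1, -i)` in the expansion of `y t` along `(1, -i)` and
`(1, i)`; the first member of the amplitude pair of a Dirac solution. -/
def fstAmplitude (lam : ℂ) (y : ℝ → ℂ × ℂ) (t : ℝ) : ℂ :=
  Complex.exp (-(Complex.I * lam * t)) * ((y t).1 + Complex.I * (y t).2)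

/-- Twice the coefficient of `exp (i λ t) (1, i)` in the same expansion. The free mode in this
direction is `exp (-i λ t) (1, i)`, but dividing by the common factor `exp (i λ t)` keeps the first
amplitude nearly constant. -/
def sndAmplitude (lam : ℂ) (y : ℝ → ℂ × ℂ) (t : ℝ) : ℂ :=
  Complex.exp (-(Complex.I * lam * t)) * ((y t).1 - Complex.I * (y t).2)

theorem cexp_smul_eq_amplitudes (lam : ℂ) (y : ℝ → ℂ × ℂ) (t : ℝ) :
    Complex.exp (-(Complex.I * lam * t)) • y t =
      (2⁻¹ * fstAmplitude lam y t) • (1, -Complex.I) +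
        (2⁻¹ * sndAmplitude lam y t) • (1, Complex.I) := by
  ext <;> simp only [fstAmplitude, sndAmplitude, Prod.fst_add, Prod.snd_add, Prod.smul_fst,
    Prod.smul_snd, smul_eq_mul]
  · ring
  · linear_combination (Complex.exp (-(Complex.I * lam * t)) * (y t).2) * Complex.I_mul_I

namespace IsDiracCurve

variable {p q : ℝ → ℂ} {T : ℝ} {lam : ℂ} {y z : ℝ → ℂ × ℂ}

theorem continuousOn (hy : IsDiracCurve p q T lam y) : ContinuousOn y (Icc 0 T) :=
  IsIntegralCurveOn.continuousOn hy

theorem const_smul (hy : IsDiracCurve p q T lam y) (c : ℂ) :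
    IsDiracCurve p q T lam (fun t => c • y t) := fun t ht =>
  ((hy t ht).const_smul c).congr_deriv (diracField_smul p q lam t c (y t)).symm

theorem sub (hy : IsDiracCurve p q T lam y) (hz : IsDiracCurve p q T lam z) :
    IsDiracCurve p q T lam (fun t => y t - z t) := fun t ht =>
  ((hy t ht).sub (hz t ht)).congr_deriv (diracField_sub p q lam t (y t) (z t)).symm

theorem isDiracCurve_endpointSol (hy : IsDiracCurve p q T lam y) (hz : IsDiracCurve p q T lam z) :
    IsDiracCurve p q T lam (endpointSol y z T) :=
  (hy.const_smul _).sub (hz.const_smul _)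

theorem hasDerivWithinAt_fst (hy : IsDiracCurve p q T lam y) {t : ℝ} (ht : t ∈ Icc 0 T) :
    HasDerivWithinAt (fun s => (y s).1) (q t * (y t).1 - (p t + lam) * (y t).2) (Icc 0 T) t :=
  (ContinuousLinearMap.fst ℝ ℂ ℂ).hasFDerivAt.comp_hasDerivWithinAt t (hy t ht)

theorem hasDerivWithinAt_snd (hy : IsDiracCurve p q T lam y) {t : ℝ} (ht : t ∈ Icc 0 T) :
    HasDerivWithinAt (fun s => (y s).2) ((lam - p t) * (y t).1 - q t * (y t).2) (Icc 0 T) t :=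
  (ContinuousLinearMap.snd ℝ ℂ ℂ).hasFDerivAt.comp_hasDerivWithinAt t (hy t ht)

-- The coefficient matrix `B⁻¹ (λ - Ω)` has trace zero.
theorem wronskian_eq (hy : IsDiracCurve p q T lam y) (hz : IsDiracCurve p q T lam z)
    {t : ℝ} (ht : t ∈ Icc 0 T) : wronskian (y t) (z t) = wronskian (y 0) (z 0) := by
  have hderiv : ∀ s ∈ Icc 0 T,
      HasDerivWithinAt (fun r => wronskian (y r) (z r)) 0 (Icc 0 T) s := fun s hs =>
    (((hy.hasDerivWithinAt_fst hs).mul (hz.hasDerivWithinAt_snd hs)).sub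
      ((hy.hasDerivWithinAt_snd hs).mul (hz.hasDerivWithinAt_fst hs))).congr_deriv (by ring)
  exact constant_of_has_deriv_right_zero (fun s hs => (hderiv s hs).continuousWithinAt)
    (fun s hs => (hderiv s (Ico_subset_Icc_self hs)).mono_of_mem_nhdsWithin
      (Icc_mem_nhdsGE_of_mem hs)) t ht

theorem eq_smul_endpointSol {X₁ X₂ : ℝ → ℂ × ℂ} (hX₁ : IsDiracCurve p q T lam X₁)
    (hX₂ : IsDiracCurve p q T lam X₂) (hX : wronskian (X₁ 0) (X₂ 0) = 1)
    (hy : IsDiracCurve p q T lam y) (hyT : (y T).1 = 0) {t : ℝ} (ht : t ∈ Icc 0 T) :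
    y t = (-(y T).2) • endpointSol X₁ X₂ T t := by
  have hT : T ∈ Icc 0 T := right_mem_Icc.2 (ht.1.trans ht.2)
  rw [eq_wronskian_smul_sub_of_wronskian_eq_one ((hX₁.wronskian_eq hX₂ ht).trans hX) (y t),
    (hy.wronskian_eq hX₁ ht).trans (hy.wronskian_eq hX₁ hT).symm,
    (hy.wronskian_eq hX₂ ht).trans (hy.wronskian_eq hX₂ hT).symm]
  simp only [wronskian, hyT, endpointSol, zero_mul, zero_sub, smul_sub, smul_smul, neg_mul]

theorem isAmplitudePair (hy : IsDiracCurve p q T lam y) :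
    IsAmplitudePair (fun t => q t - Complex.I * p t) (fun t => q t + Complex.I * p t)
      (-(2 * Complex.I * lam)) T (fstAmplitude lam y) (sndAmplitude lam y) := by
  have hexp (t : ℝ) : HasDerivAt (fun s : ℝ => Complex.exp (-(Complex.I * lam * s)))
      (Complex.exp (-(Complex.I * lam * t)) * -(Complex.I * lam)) t := by
    simpa only [neg_mul] using hasDerivAt_cexp_mul_ofReal (-(Complex.I * lam)) t
  constructor <;> intro t ht
  · refine ((hexp t).hasDerivWithinAt.mul ((hy.hasDerivWithinAt_fst ht).add
      ((hy.hasDerivWithinAt_snd ht).const_mul Complex.I))).congr_deriv ?_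
    simp only [sndAmplitude, Pi.add_apply]
    linear_combination (Complex.exp (-(Complex.I * lam * t)) * (p t + lam) * (y t).2 * (-1)) *
      Complex.I_mul_I
  · refine ((hexp t).hasDerivWithinAt.mul ((hy.hasDerivWithinAt_fst ht).sub
      ((hy.hasDerivWithinAt_snd ht).const_mul Complex.I))).congr_deriv ?_
    simp only [fstAmplitude, sndAmplitude, Pi.sub_apply]
    linear_combination (Complex.exp (-(Complex.I * lam * t)) * (p t + lam) * (y t).2 * (-1)) *
      Complex.I_mul_I

end IsDiracCurve

/-! ### Nonlocal forms -/

section WeightedIntegrals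

variable {X : Type*} [MeasurableSpace X] {μ : Measure X} {s : Set X}

theorem setIntegral_mul_indicator_singleton [MeasurableSingletonClass X] {a : X} (ha : a ∈ s)
    (w : X → ℂ) (c : ℂ) :
    ∫ t in s, w t * ({a} : Set X).indicator (fun _ => c) t ∂μ = w a * μ.real {a} * c := by
  have hmul : (fun t => w t * ({a} : Set X).indicator (fun _ => c) t) =
      ({a} : Set X).indicator fun t => w t * c := by
    ext t
    rw [indicator_mul_right]
  rw [hmul, setIntegral_indicator (measurableSet_singleton a),
    inter_eq_right.2 (singleton_subset_iff.2 ha), integral_singleton, Complex.real_smul]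
  ring

theorem tendsto_setIntegral_mul {ι : Type*} {l : Filter ι} [l.IsCountablyGenerated]
    (hs : MeasurableSet s) {w g : X → ℂ} {f : ι → X → ℂ} {K : ℝ} (hw : IntegrableOn w s μ)
    (hf : ∀ i, AEStronglyMeasurable (f i) (μ.restrict s))
    (hK : ∀ᶠ i in l, ∀ t ∈ s, ‖f i t‖ ≤ K)
    (hfg : ∀ t ∈ s, Tendsto (fun i => f i t) l (nhds (g t))) :
    Tendsto (fun i => ∫ t in s, w t * f i t ∂μ) l (nhds (∫ t in s, w t * g t ∂μ)) := by
  refine tendsto_integral_filter_of_dominated_convergence (fun t => ‖w t‖ * K)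
    (Eventually.of_forall fun i => hw.aestronglyMeasurable.mul (hf i)) ?_ (hw.norm.mul_const K)
    (ae_restrict_of_forall_mem hs fun t ht => (hfg t ht).const_mul (w t))
  filter_upwards [hK] with i hi
  refine ae_restrict_of_forall_mem hs fun t ht => ?_
  rw [norm_mul]
  exact mul_le_mul_of_nonneg_left (hi t ht) (norm_nonneg _)

end WeightedIntegrals

namespace NonlocalForm

variable {T : ℝ} (U : NonlocalForm T) {y z : ℝ → ℂ × ℂ}

theorem app_smul (c : ℂ) (y : ℝ → ℂ × ℂ) : U.app (fun t => c • y t) = c * U.app y := by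
  simp only [app, Prod.smul_fst, Prod.smul_snd, smul_eq_mul, mul_left_comm _ c,
    integral_const_mul, mul_add]

theorem app_sub (hy : ContinuousOn y (Icc 0 T)) (hz : ContinuousOn z (Icc 0 T)) :
    U.app (fun t => y t - z t) = U.app y - U.app z := by
  have hint₁ {f : ℝ → ℂ} (hf : ContinuousOn f (Icc 0 T)) :=
    U.int₁.integrableOn.mul_continuousOn hf isCompact_Icc
  have hint₂ {f : ℝ → ℂ} (hf : ContinuousOn f (Icc 0 T)) :=
    U.int₂.integrableOn.mul_continuousOn hf isCompact_Icc
  simp only [app, Prod.fst_sub, Prod.snd_sub, mul_sub]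
  rw [integral_sub (hint₁ hy.fst) (hint₁ hz.fst), integral_sub (hint₂ hy.snd) (hint₂ hz.snd)]
  ring

variable {U} in
theorem app_congr (hyz : EqOn y z (Icc 0 T)) : U.app y = U.app z := by
  unfold app
  congr 1 <;> exact setIntegral_congr_fun measurableSet_Icc fun t ht => by simp only [hyz ht]

theorem app_indicator_zero (hT : 0 ≤ T) (v : ℂ × ℂ) :
    U.app (({0} : Set ℝ).indicator fun _ => v) = U.h₁ * v.1 + U.h₂ * v.2 := by
  have hfst (t : ℝ) : (({0} : Set ℝ).indicator (fun _ => v) t).1 =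
      ({0} : Set ℝ).indicator (fun _ => v.1) t := by
    simp only [indicator_apply, apply_ite Prod.fst, Prod.fst_zero]
  have hsnd (t : ℝ) : (({0} : Set ℝ).indicator (fun _ => v) t).2 =
      ({0} : Set ℝ).indicator (fun _ => v.2) t := by
    simp only [indicator_apply, apply_ite Prod.snd, Prod.snd_zero]
  have h0 : (0 : ℝ) ∈ Icc 0 T := left_mem_Icc.2 hT
  simp only [app, hfst, hsnd, setIntegral_mul_indicator_singleton h0]
  rfl

theorem tendsto_app {ι : Type*} {l : Filter ι} [l.IsCountablyGenerated] {y : ι → ℝ → ℂ × ℂ}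
    {K : ℝ} (hy : ∀ i, ContinuousOn (y i) (Icc 0 T))
    (hK : ∀ᶠ i in l, ∀ t ∈ Icc 0 T, ‖y i t‖ ≤ K)
    (hyz : ∀ t ∈ Icc 0 T, Tendsto (fun i => y i t) l (nhds (z t))) :
    Tendsto (fun i => U.app (y i)) l (nhds (U.app z)) :=
  (tendsto_setIntegral_mul measurableSet_Icc U.int₁.integrableOn
    (fun i => (hy i).fst.aestronglyMeasurable measurableSet_Icc)
    (hK.mono fun _ h t ht => (norm_fst_le _).trans (h t ht)) fun t ht => (hyz t ht).fst_nhds).add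
  (tendsto_setIntegral_mul measurableSet_Icc U.int₂.integrableOn
    (fun i => (hy i).snd.aestronglyMeasurable measurableSet_Icc)
    (hK.mono fun _ h t ht => (norm_snd_le _).trans (h t ht)) fun t ht => (hyz t ht).snd_nhds)

theorem app_endpointSol {X₁ X₂ : ℝ → ℂ × ℂ} (hX₁ : ContinuousOn X₁ (Icc 0 T))
    (hX₂ : ContinuousOn X₂ (Icc 0 T)) :
    U.app (endpointSol X₁ X₂ T) = U.app X₁ * (X₂ T).1 - U.app X₂ * (X₁ T).1 := by
  have hsub := U.app_sub (hX₁.const_smul (X₂ T).1) (hX₂.const_smul (X₁ T).1)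
  refine hsub.trans ?_
  rw [mul_comm, mul_comm (U.app X₂)]
  exact congrArg₂ _ (U.app_smul _ X₁) (U.app_smul _ X₂)

end NonlocalForm

/-! ### The Weyl solution -/

theorem IsDiracCurve.app_endpointSol_smul_eq {p q : ℝ → ℂ} {T : ℝ} {lam : ℂ}
    {X₁ X₂ y : ℝ → ℂ × ℂ} {U : NonlocalForm T} (hX₁ : IsDiracCurve p q T lam X₁)
    (hX₂ : IsDiracCurve p q T lam X₂) (hX : wronskian (X₁ 0) (X₂ 0) = 1)
    (hy : IsDiracCurve p q T lam y) (hU : U.app y = 1) (hyT : (y T).1 = 0) {t : ℝ}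
    (ht : t ∈ Icc 0 T) : U.app (endpointSol X₁ X₂ T) • y t = endpointSol X₁ X₂ T t := by
  have hmul : EqOn y (fun t => (-(y T).2) • endpointSol X₁ X₂ T t) (Icc 0 T) := fun t ht =>
    hX₁.eq_smul_endpointSol hX₂ hX hy hyT ht
  rw [NonlocalForm.app_congr hmul, NonlocalForm.app_smul] at hU
  rw [hmul ht, smul_smul, mul_comm, hU, one_smul]

theorem tendsto_re_neg_two_mul_I_mul :
    Tendsto (fun lam : ℂ => (-(2 * Complex.I * lam)).re) (comap Complex.im atTop) atTop := by
  simpa using tendsto_comap.const_mul_atTop two_pos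

theorem norm_cexp_I_mul (lam : ℂ) (t : ℝ) :
    ‖Complex.exp (Complex.I * lam * t)‖ = Real.exp (-lam.im * t) := by
  simp [Complex.norm_exp]

/-- A family of Dirac solutions, indexed by the spectral parameter, whose first component vanishes
at `T` and which is scaled so that the two amplitudes at `T` are `2` and `-2`, independently of the
spectral parameter. -/
structure IsNormalizedFamily (p q : ℝ → ℂ) (T : ℝ) (y : ℂ → ℝ → ℂ × ℂ) : Prop where
  isDiracCurve : ∀ lam, IsDiracCurve p q T lam (y lam)
  apply_endpoint : ∀ lam, y lam T = (0, -(2 * Complex.I * Complex.exp (Complex.I * lam * T)))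

theorem isNormalizedFamily_smul_endpointSol {p q : ℝ → ℂ} {T : ℝ} {X₁ X₂ : ℂ → ℝ → ℂ × ℂ}
    (hT : 0 ≤ T) (hX₁ : ∀ lam, IsDiracCurve p q T lam (X₁ lam))
    (hX₂ : ∀ lam, IsDiracCurve p q T lam (X₂ lam))
    (hX : ∀ lam, wronskian (X₁ lam 0) (X₂ lam 0) = 1) :
    IsNormalizedFamily p q T fun lam t =>
      (2 * Complex.I * Complex.exp (Complex.I * lam * T)) •
        endpointSol (X₁ lam) (X₂ lam) T t where
  isDiracCurve lam := ((hX₁ lam).isDiracCurve_endpointSol (hX₂ lam)).const_smul _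
  apply_endpoint lam := by
    rw [endpointSol_self, (hX₁ lam).wronskian_eq (hX₂ lam) (right_mem_Icc.2 hT), hX,
      Prod.smul_mk, smul_zero, smul_eq_mul, mul_neg_one]

namespace IsNormalizedFamily

variable {p q : ℝ → ℂ} {T : ℝ} {y : ℂ → ℝ → ℂ × ℂ}

theorem fstAmplitude_endpoint (h : IsNormalizedFamily p q T y) (lam : ℂ) :
    fstAmplitude lam (y lam) T = 2 := by
  rw [fstAmplitude, h.apply_endpoint, Complex.exp_neg]
  field_simp
  simp

theorem sndAmplitude_endpoint (h : IsNormalizedFamily p q T y) (lam : ℂ) :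
    sndAmplitude lam (y lam) T = -2 := by
  rw [sndAmplitude, h.apply_endpoint, Complex.exp_neg]
  field_simp
  simp

theorem tendsto_cexp_smul (h : IsNormalizedFamily p q T y) (hp : ContinuousOn p (Icc 0 T))
    (hq : ContinuousOn q (Icc 0 T)) {x : ℝ} (hx : x ∈ Ico 0 T) :
    Tendsto (fun lam : ℂ => Complex.exp (-(Complex.I * lam * x)) • y lam x)
      (comap Complex.im atTop) (nhds (1, -Complex.I)) := by
  have hα : ContinuousOn (fun t => q t - Complex.I * p t) (Icc 0 T) := by fun_prop
  have hβ : ContinuousOn (fun t => q t + Complex.I * p t) (Icc 0 T) := by fun_prop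
  have hfst := IsAmplitudePair.tendsto_fst (fun lam => (h.isDiracCurve lam).isAmplitudePair)
    tendsto_re_neg_two_mul_I_mul hα hβ h.fstAmplitude_endpoint h.sndAmplitude_endpoint
    (Ico_subset_Icc_self hx)
  have hsnd := IsAmplitudePair.tendsto_snd (fun lam => (h.isDiracCurve lam).isAmplitudePair)
    tendsto_re_neg_two_mul_I_mul hα hβ h.fstAmplitude_endpoint h.sndAmplitude_endpoint hx
  have hsum := ((hfst.const_mul 2⁻¹).smul_const ((1 : ℂ), -Complex.I)).add
    ((hsnd.const_mul 2⁻¹).smul_const ((1 : ℂ), Complex.I))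
  rw [inv_mul_cancel₀ two_ne_zero, one_smul, mul_zero, zero_smul, add_zero] at hsum
  simpa only [cexp_smul_eq_amplitudes] using hsum

theorem exists_eventually_norm_le (h : IsNormalizedFamily p q T y)
    (hp : ContinuousOn p (Icc 0 T)) (hq : ContinuousOn q (Icc 0 T)) :
    ∃ K, ∀ᶠ lam in comap Complex.im atTop, ∀ t ∈ Icc 0 T,
      ‖y lam t‖ ≤ Real.exp (-lam.im * t) * K := by
  obtain ⟨K, hK⟩ := IsAmplitudePair.exists_eventually_norm_le
    (fun lam => (h.isDiracCurve lam).isAmplitudePair) tendsto_re_neg_two_mul_I_mul (by fun_prop)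
    (by fun_prop) h.fstAmplitude_endpoint h.sndAmplitude_endpoint
  refine ⟨K, hK.mono fun lam hlam t ht => ?_⟩
  obtain ⟨hu, hv⟩ := hlam t ht
  have hscaled : ‖Complex.exp (-(Complex.I * lam * t)) • y lam t‖ ≤ K := by
    rw [cexp_smul_eq_amplitudes]
    refine (norm_add_le _ _).trans ?_
    simp only [norm_smul, norm_mul, norm_inv, Prod.norm_def, norm_neg, norm_one, Complex.norm_I,
      max_self, RCLike.norm_ofNat, mul_one]
    linarith
  calc ‖y lam t‖
      = ‖Complex.exp (Complex.I * lam * t) • Complex.exp (-(Complex.I * lam * t)) • y lam t‖ := by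
        rw [smul_smul, ← Complex.exp_add, add_neg_cancel, Complex.exp_zero, one_smul]
    _ ≤ Real.exp (-lam.im * t) * K := by
        rw [norm_smul, norm_cexp_I_mul]
        gcongr

theorem tendsto_indicator_zero (h : IsNormalizedFamily p q T y) (hp : ContinuousOn p (Icc 0 T))
    (hq : ContinuousOn q (Icc 0 T)) (hT : 0 < T) {t : ℝ} (ht : t ∈ Icc 0 T) :
    Tendsto (fun lam => y lam t) (comap Complex.im atTop)
      (nhds (({0} : Set ℝ).indicator (fun _ => (1, -Complex.I)) t)) := by
  rcases ht.1.eq_or_lt with rfl | ht0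
  · simpa using h.tendsto_cexp_smul hp hq (left_mem_Ico.2 hT)
  · obtain ⟨K, hK⟩ := h.exists_eventually_norm_le hp hq
    have hexp : Tendsto (fun lam : ℂ => -lam.im * t) (comap Complex.im atTop) atBot :=
      (tendsto_neg_atTop_atBot.comp tendsto_comap).atBot_mul_const ht0
    rw [indicator_of_notMem (mt mem_singleton_iff.1 ht0.ne')]
    refine squeeze_zero_norm' (hK.mono fun lam hlam => hlam t ht) ?_
    simpa using (Real.tendsto_exp_atBot.comp hexp).mul_const K

theorem tendsto_app (h : IsNormalizedFamily p q T y) (hp : ContinuousOn p (Icc 0 T))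
    (hq : ContinuousOn q (Icc 0 T)) (hT : 0 < T) (U : NonlocalForm T) :
    Tendsto (fun lam => U.app (y lam)) (comap Complex.im atTop)
      (nhds (U.h₁ - Complex.I * U.h₂)) := by
  have hlim : U.app (({0} : Set ℝ).indicator fun _ => (1, -Complex.I)) =
      U.h₁ - Complex.I * U.h₂ := by
    rw [U.app_indicator_zero hT.le]
    ring
  obtain ⟨K, hK⟩ := h.exists_eventually_norm_le hp hq
  rw [← hlim]
  refine U.tendsto_app (K := |K|) (fun lam => (h.isDiracCurve lam).continuousOn) ?_
    fun t ht => h.tendsto_indicator_zero hp hq hT ht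
  filter_upwards [hK, tendsto_comap.eventually_ge_atTop 0] with lam hlam him t ht
  have hexp : Real.exp (-lam.im * t) ≤ 1 :=
    Real.exp_le_one_iff.2 (mul_nonpos_of_nonpos_of_nonneg (neg_nonpos.2 him) ht.1)
  calc ‖y lam t‖ ≤ Real.exp (-lam.im * t) * K := hlam t ht
    _ ≤ Real.exp (-lam.im * t) * |K| := by gcongr; exact le_abs_self K
    _ ≤ |K| := mul_le_of_le_one_left (abs_nonneg K) hexp

theorem tendsto_smul_inv_app_smul (h : IsNormalizedFamily p q T y)
    (hp : ContinuousOn p (Icc 0 T)) (hq : ContinuousOn q (Icc 0 T)) (U : NonlocalForm T)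
    (hU : U.h₁ - Complex.I * U.h₂ ≠ 0) {x : ℝ} (hx : x ∈ Ico 0 T) :
    Tendsto (fun lam : ℂ => (U.h₁ - Complex.I * U.h₂) •
        (Complex.exp (-(Complex.I * lam * x)) • (U.app (y lam))⁻¹ • y lam x))
      (comap Complex.im atTop) (nhds (1, -Complex.I)) := by
  have happ := h.tendsto_app hp hq (hx.1.trans_lt hx.2) U
  have hlim := ((happ.inv₀ hU).smul (h.tendsto_cexp_smul hp hq hx)).const_smul
    (U.h₁ - Complex.I * U.h₂)
  rw [smul_inv_smul₀ hU] at hlim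
  simpa only [smul_comm (Complex.exp _)] using hlim

end IsNormalizedFamily

theorem statement14_general {T : ℝ} {p q : ℝ → ℂ} (hp : ContinuousOn p (Icc 0 T))
    (hq : ContinuousOn q (Icc 0 T)) (U : NonlocalForm T) (hh : U.h₁ - Complex.I * U.h₂ ≠ 0)
    (X₁ X₂ : ℂ → ℝ → ℂ × ℂ)
    (hX₁ : ∀ lam, IsDiracSol p q T lam (X₁ lam) ∧ X₁ lam 0 = (1, 0))
    (hX₂ : ∀ lam, IsDiracSol p q T lam (X₂ lam) ∧ X₂ lam 0 = (0, 1)) (Δ₁ : ℂ → ℂ)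
    (hΔ₁ : ∀ lam, Δ₁ lam = U.app (X₁ lam) * (X₂ lam T).1 - U.app (X₂ lam) * (X₁ lam T).1)
    (Φ : ℂ → ℝ → ℂ × ℂ)
    (hΦ : ∀ lam, Δ₁ lam ≠ 0 →
      IsDiracSol p q T lam (Φ lam) ∧ U.app (Φ lam) = 1 ∧ (Φ lam T).1 = 0)
    {x : ℝ} (hx : x ∈ Ico 0 T) :
    (∀ᶠ lam in comap Complex.im atTop, Δ₁ lam ≠ 0) ∧
    Tendsto
      (fun lam : ℂ => (U.h₁ - Complex.I * U.h₂) • (Complex.exp (-(Complex.I * lam * x)) • Φ lam x))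
      (comap Complex.im atTop) (nhds (1, -Complex.I)) := by
  have hT : 0 < T := hx.1.trans_lt hx.2
  have hY₁ (lam : ℂ) := (hX₁ lam).1.isDiracCurve hp hq
  have hY₂ (lam : ℂ) := (hX₂ lam).1.isDiracCurve hp hq
  have hW (lam : ℂ) : wronskian (X₁ lam 0) (X₂ lam 0) = 1 := by
    simp [wronskian, (hX₁ lam).2, (hX₂ lam).2]
  have hη := isNormalizedFamily_smul_endpointSol hT.le hY₁ hY₂ hW
  have hψ (lam : ℂ) : U.app (endpointSol (X₁ lam) (X₂ lam) T) = Δ₁ lam :=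
    (U.app_endpointSol (hY₁ lam).continuousOn (hY₂ lam).continuousOn).trans (hΔ₁ lam).symm
  have hne : ∀ᶠ lam in comap Complex.im atTop, Δ₁ lam ≠ 0 := by
    filter_upwards [(hη.tendsto_app hp hq hT U).eventually_ne hh] with lam hlam
    rw [U.app_smul, hψ] at hlam
    exact right_ne_zero_of_mul hlam
  refine ⟨hne, (hη.tendsto_smul_inv_app_smul hp hq U hh hx).congr' ?_⟩
  filter_upwards [hne] with lam hlam
  obtain ⟨hsol, hU, hΦT⟩ := hΦ lam hlam
  have hscale : 2 * Complex.I * Complex.exp (Complex.I * lam * T) ≠ 0 := by simp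
  have hΦψ := (hY₁ lam).app_endpointSol_smul_eq (hY₂ lam) (hW lam) (hsol.isDiracCurve hp hq) hU hΦT
    (Ico_subset_Icc_self hx)
  rw [U.app_smul, ← hΦψ, smul_smul _ (U.app _), inv_smul_smul₀ (mul_ne_zero hscale (hψ lam ▸ hlam))]

/-- **Lemma 2, equation (17)**: for fixed `δ ∈ (0, π/2)` and `x ∈ [0,T)`, as `|λ| → ∞`
in the sector `arg λ ∈ [δ, π−δ]` one eventually has `Δ₁(λ) ≠ 0` (so `Φ(·,λ)` is defined)
and `(h₁,₁ − i h₁,₂) e^{−iλx} Φ(x,λ) → (1, −i)ᵀ`. -/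
theorem statement14
    (T : ℝ) (hT : 0 < T)
    (p q : ℝ → ℂ) (hp : AbsContOn p T) (hq : AbsContOn q T)
    (U₁ U₂ : NonlocalForm T)
    (hh : U₁.h₁ - Complex.I * U₁.h₂ ≠ 0)
    (X₁ X₂ : ℂ → ℝ → ℂ × ℂ)
    (hX₁ : ∀ lam, IsDiracSol p q T lam (X₁ lam) ∧ X₁ lam 0 = (1, 0))
    (hX₂ : ∀ lam, IsDiracSol p q T lam (X₂ lam) ∧ X₂ lam 0 = (0, 1))
    (Δ₁ : ℂ → ℂ)
    (hΔ₁ : ∀ lam, Δ₁ lam =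
      U₁.app (X₁ lam) * (X₂ lam T).1 - U₁.app (X₂ lam) * (X₁ lam T).1)
    (Φ : ℂ → ℝ → ℂ × ℂ)
    (hΦ : ∀ lam, Δ₁ lam ≠ 0 →
      IsDiracSol p q T lam (Φ lam) ∧ U₁.app (Φ lam) = 1 ∧ (Φ lam T).1 = 0)
    (δ : ℝ) (hδ : δ ∈ Ioo (0 : ℝ) (Real.pi / 2))
    (x : ℝ) (hx : x ∈ Ico (0 : ℝ) T) :
    (∀ᶠ lam in sectorFilter δ, Δ₁ lam ≠ 0) ∧
    Tendsto
      (fun lam : ℂ =>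
        (U₁.h₁ - Complex.I * U₁.h₂) •
          (Complex.exp (-(Complex.I * lam * (x : ℂ))) • Φ lam x))
      (sectorFilter δ) (nhds ((1 : ℂ), -Complex.I)) := by
  have hle := sectorFilter_le_comap_im_atTop hδ
  have h := statement14_general hp.continuousOn hq.continuousOn U₁ hh X₁ X₂ hX₁ hX₂ Δ₁ hΔ₁ Φ hΦ hx
  exact ⟨h.1.filter_mono hle, h.2.mono_left hle⟩
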